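/- arXiv:2211.05460 — 2 statements merged into one kernel-verified Lean document; each statement's English description precedes it below -/
import Mathlib

section
/- For every integer k ≥ 2, the following identity of formal power series in x over ℤ holds: (1 − 2x + x^{k+1})² · Σ_{n≥1} ( Σ_{w ∈ F_{n,k}} sper(w) ) xⁿ = 5x − 5x² − (2 + k)·x^{k} − (1 − k)·x^{k+1} + 4x^{k+2} − x^{2k+2}. In other words, the generating function for the total semiperimeter of all k-bonacci polyominoes with n columns is P_k(x) = (5x − 5x² − (2+k)x^k − (1−k)x^{k+1} + 4x^{k+2} − x^{2k+2})/(1 − 2x + x^{k+1})². -/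
open Finset

/-- Number of maximal runs (blocks) of consecutive `1`s in a binary word. -/
def wRuns (w : List Bool) : ℕ := w.count true - (w.zip w.tail).count (true, true)

/-- The set `F_{n,k}` of binary words of length `n` avoiding `k` consecutive `1`s. -/
def kbonWords (n k : ℕ) : Finset (Fin n → Bool) :=
  Finset.univ.filter (fun w => ¬ (List.replicate k true <:+: List.ofFn w))

/-- Semiperimeter of the `k`-bonacci polyomino of a word of length `n`. -/
def wSper (n : ℕ) (w : List Bool) : ℕ := n + 1 + wRuns w

/-! Cutting a word at its first `0` writes it uniquely as `1^j` or as `1^j 0 v`, and both membership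
in `F_{n,k}` and the semiperimeter are compatible with the cut: `sper (u0v) = sper u + sper v`.
Hence the generating function `S = ∑ t ^ sper(w) x ^ |w|` satisfies `S = P (1 + x S)`, where
`P = ∑_{j < k} t ^ sper(1^j) x ^ j`, and is a rational function of `t` and `x`. Reading this
identity at `t = 1 + ε` over the dual numbers differentiates it at `t = 1`, which yields the total
semiperimeter. -/

open PowerSeries

section Words

lemma eq_nil_of_prefix_cons_of_notMem {α : Type*} {a : α} {l v : List α} (ha : a ∉ l)
    (h : l <+: a :: v) : l = [] := by
  rcases List.prefix_cons_iff.1 h with rfl | ⟨t, rfl, -⟩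
  · rfl
  · exact absurd List.mem_cons_self ha

lemma infix_append_cons_iff_of_notMem {α : Type*} {a : α} {l : List α} (ha : a ∉ l)
    (u v : List α) : l <:+: u ++ a :: v ↔ l <:+: u ∨ l <:+: v := by
  constructor
  · rw [List.infix_append_iff_ne_nil]
    rintro (hu | hv | ⟨s, t, -, ht, rfl, -, htv⟩)
    · exact .inl hu
    · rcases List.infix_cons_iff.1 hv with hpre | hv
      · rw [eq_nil_of_prefix_cons_of_notMem ha hpre]
        exact .inl List.nil_infix
      · exact .inr hv
    · have hat : a ∉ t := fun hmem => ha (List.mem_append_right s hmem)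
      exact absurd (eq_nil_of_prefix_cons_of_notMem hat htv) ht
  · rintro (hu | hv)
    · exact hu.trans (List.prefix_append u (a :: v)).isInfix
    · exact hv.trans ((List.suffix_cons a v).trans (List.suffix_append u (a :: v))).isInfix

lemma count_zip_tail_le_count (w : List Bool) :
    (w.zip w.tail).count (true, true) ≤ w.count true :=
  calc (w.zip w.tail).count (true, true)
      ≤ ((w.zip w.tail).map Prod.snd).count true :=
        List.count_le_count_map (f := Prod.snd) (x := (true, true))
    _ = w.tail.count true := by rw [List.map_snd_zip (by simp)]
    _ ≤ w.count true := w.tail_sublist.count_le _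

lemma wRuns_false_cons (w : List Bool) : wRuns (false :: w) = wRuns w := by
  cases w <;> simp [wRuns]

lemma wRuns_true_true_cons (w : List Bool) : wRuns (true :: true :: w) = wRuns (true :: w) := by
  simp [wRuns]

lemma wRuns_true_false_cons (w : List Bool) : wRuns (true :: false :: w) = wRuns w + 1 := by
  have hle := count_zip_tail_le_count w
  have hcount : (true :: false :: w).count true = w.count true + 1 := by simp
  have hzip : ((true :: false :: w).zip (false :: w)).count (true, true) =
      (w.zip w.tail).count (true, true) := by
    cases w <;> simp
  rw [wRuns, List.tail_cons, hcount, hzip, wRuns]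
  omega

lemma wRuns_replicate_true_succ (j : ℕ) : wRuns (List.replicate (j + 1) true) = 1 := by
  induction j with
  | zero => rfl
  | succ j ih => rwa [List.replicate_succ, List.replicate_succ, wRuns_true_true_cons]

lemma wRuns_append_false_cons (u v : List Bool) :
    wRuns (u ++ false :: v) = wRuns u + wRuns v := by
  induction u with
  | nil => simpa [wRuns] using wRuns_false_cons v
  | cons a u ih =>
    rcases a with _ | _
    · simp only [List.cons_append, wRuns_false_cons, ih]
    · rcases u with _ | ⟨_ | _, u⟩
      · rw [show wRuns [true] = 1 from wRuns_replicate_true_succ 0, add_comm]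
        exact wRuns_true_false_cons v
      · simp only [List.cons_append, wRuns_false_cons, wRuns_true_false_cons] at ih ⊢
        omega
      · simpa only [List.cons_append, wRuns_true_true_cons] using ih

lemma wSper_append_false_cons (u v : List Bool) :
    wSper (u ++ false :: v).length (u ++ false :: v) = wSper u.length u + wSper v.length v := by
  simp only [wSper, wRuns_append_false_cons, List.length_append, List.length_cons]
  omega

end Words

section WordSeries

lemma sum_bool_words_succ {M : Type*} [AddCommMonoid M] (f : List Bool → M) (n : ℕ) :
    ∑ w : Fin (n + 1) → Bool, f (List.ofFn w) =
      ∑ w : Fin n → Bool, f (false :: List.ofFn w) +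
        ∑ w : Fin n → Bool, f (true :: List.ofFn w) := by
  rw [← (Fin.consEquiv fun _ => Bool).sum_comp, Fintype.sum_prod_type, Fintype.sum_bool, add_comm]
  simp [Fin.consEquiv, List.ofFn_succ]

section Semiring

variable {R : Type*} [Semiring R]

/-- The generating function `∑ f(w) x ^ |w|` of binary words, counted with the weight `f`. -/
noncomputable def wordSeries (f : List Bool → R) : R⟦X⟧ :=
  .mk fun n => ∑ w : Fin n → Bool, f (List.ofFn w)

lemma wordSeries_eq_C_add_X_mul (f : List Bool → R) :
    wordSeries f =
      C (f []) + X * (wordSeries (fun w => f (false :: w)) +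
        wordSeries fun w => f (true :: w)) := by
  ext n
  cases n with
  | zero => simp [wordSeries]
  | succ n => simp [wordSeries, sum_bool_words_succ f n, coeff_succ_X_mul, -List.ofFn_succ]

lemma wordSeries_const_mul (a : R) (f : List Bool → R) :
    wordSeries (fun w => a * f w) = C a * wordSeries f := by
  ext n
  simp [wordSeries, mul_sum]

lemma wordSeries_zero : wordSeries (fun _ => (0 : R)) = 0 := by
  ext
  simp [wordSeries]

end Semiring

variable {R : Type*} [CommSemiring R] {f : List Bool → R}
  (hf : ∀ u v, f (u ++ false :: v) = f u * f v)
include hf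

lemma wordSeries_replicate_true_append (j : ℕ) :
    wordSeries (fun w => f (List.replicate j true ++ w)) =
      C (f (List.replicate j true)) * (1 + X * wordSeries f) +
        X * wordSeries fun w => f (List.replicate (j + 1) true ++ w) := by
  rw [wordSeries_eq_C_add_X_mul]
  simp only [hf, wordSeries_const_mul, List.append_nil, List.replicate_succ', List.append_assoc,
    List.singleton_append]
  ring

lemma wordSeries_eq_sum_add (k : ℕ) :
    wordSeries f =
      (∑ j ∈ range k, C (f (List.replicate j true)) * X ^ j) * (1 + X * wordSeries f) +
        X ^ k * wordSeries fun w => f (List.replicate k true ++ w) := by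
  induction k with
  | zero => simp
  | succ k ih =>
    rw [wordSeries_replicate_true_append hf] at ih
    refine ih.trans ?_
    rw [sum_range_succ]
    ring

end WordSeries

section Semiperimeter

section MonoidWithZero

variable {R : Type*} [MonoidWithZero R]

/-- The weight `t ^ sper(w)` of a `k`-bonacci word `w`; all other words have weight `0`. -/
def kbonWeight (k : ℕ) (t : R) (w : List Bool) : R :=
  if List.replicate k true <:+: w then 0 else t ^ wSper w.length w

lemma kbonWeight_append_false_cons (k : ℕ) (t : R) (u v : List Bool) :
    kbonWeight k t (u ++ false :: v) = kbonWeight k t u * kbonWeight k t v := by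
  have havoid := infix_append_cons_iff_of_notMem (a := false) (l := List.replicate k true)
    (by simp) u v
  simp only [kbonWeight, havoid, wSper_append_false_cons, pow_add]
  split_ifs <;> simp_all

lemma kbonWeight_replicate_true_append (k : ℕ) (t : R) (w : List Bool) :
    kbonWeight k t (List.replicate k true ++ w) = 0 :=
  if_pos (List.prefix_append _ _).isInfix

lemma kbonWeight_replicate_true {j k : ℕ} (h : j < k) (t : R) :
    kbonWeight k t (List.replicate j true) = t ^ wSper j (List.replicate j true) := by
  rw [kbonWeight, if_neg, List.length_replicate]
  exact fun hsub => h.not_ge (by simpa using hsub.length_le)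

end MonoidWithZero

lemma wordSeries_kbonWeight {R : Type*} [Semiring R] (k : ℕ) (t : R) :
    wordSeries (kbonWeight k t) =
      .mk fun n => ∑ w ∈ kbonWords n k, t ^ wSper n (List.ofFn w) := by
  ext n
  simp [wordSeries, kbonWeight, kbonWords, sum_filter, ite_not]

variable {R : Type*} [CommRing R]

lemma one_sub_C_mul_X_mul_sum_wSper_replicate_true {k : ℕ} (hk : k ≠ 0) (t : R) :
    (1 - C t * X) * ∑ j ∈ range k, C (t ^ wSper j (List.replicate j true)) * (X : R⟦X⟧) ^ j =
      C t - C t ^ 2 * X + C t ^ 3 * X - C t ^ (k + 2) * X ^ k := by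
  induction k, Nat.one_le_iff_ne_zero.2 hk using Nat.le_induction with
  | base =>
    have hempty : wSper 0 (List.replicate 0 true) = 1 := rfl
    rw [sum_range_one, hempty, pow_one, pow_zero]
    ring
  | succ k hk' ih =>
    obtain ⟨j, rfl⟩ := Nat.exists_eq_add_of_le' hk'
    rw [sum_range_succ, mul_add, ih j.succ_ne_zero, wSper, wRuns_replicate_true_succ, map_pow]
    ring

theorem semiperimeter_gf {k : ℕ} (hk : k ≠ 0) (t : R) :
    (1 - 2 * C t * X + (C t ^ 2 - C t ^ 3) * X ^ 2 + C t ^ (k + 2) * X ^ (k + 1)) *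
        (PowerSeries.mk fun n => ∑ w ∈ kbonWords n k, t ^ wSper n (List.ofFn w)) =
      C t - C t ^ 2 * X + C t ^ 3 * X - C t ^ (k + 2) * X ^ k := by
  have hsum := one_sub_C_mul_X_mul_sum_wSper_replicate_true hk t
  have hcut := wordSeries_eq_sum_add (kbonWeight_append_false_cons k t) k
  rw [sum_congr rfl fun j hj => by rw [kbonWeight_replicate_true (mem_range.1 hj)],
    funext (kbonWeight_replicate_true_append k t), wordSeries_zero, mul_zero, add_zero] at hcut
  rw [← wordSeries_kbonWeight]
  linear_combination (1 - C t * X) * hcut + (1 + X * wordSeries (kbonWeight k t)) * hsum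

end Semiperimeter

section DualNumbers

open scoped DualNumber

lemma one_add_pow_of_sq_eq_zero {R : Type*} [Semiring R] {e : R} (he : e ^ 2 = 0) (n : ℕ) :
    (1 + e) ^ n = 1 + n * e := by
  induction n with
  | zero => simp
  | succ n ih =>
    have hne : n * e * e = 0 := by rw [mul_assoc, ← sq, he, mul_zero]
    rw [pow_succ, ih, add_mul, one_mul, mul_add, mul_one, hne, Nat.cast_succ, add_mul, one_mul]
    abel

variable {R : Type*}

local notation "ι" => PowerSeries.map (TrivSqZeroExt.inlHom R R)

lemma map_inl_add_C_eps_mul_map_inl_inj [Semiring R] {a b c d : R⟦X⟧}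
    (h : ι a + C ε * ι b = ι c + C ε * ι d) : a = c ∧ b = d := by
  have hcoeff (n : ℕ) := congrArg (coeff n) h
  simp only [map_add, coeff_map, coeff_C_mul] at hcoeff
  exact ⟨ext fun n => by simpa using congrArg TrivSqZeroExt.fst (hcoeff n),
    ext fun n => by simpa using congrArg TrivSqZeroExt.snd (hcoeff n)⟩

lemma mk_sum_one_add_eps_pow [CommSemiring R] {α : ℕ → Type*} (s : ∀ n, Finset (α n))
    (e : ∀ n, α n → ℕ) :
    (PowerSeries.mk fun n => ∑ w ∈ s n, (1 + ε : R[ε]) ^ e n w) =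
      ι (.mk fun n => ((s n).card : R)) + C ε * ι (.mk fun n => ∑ w ∈ s n, (e n w : R)) := by
  refine PowerSeries.ext fun n => ?_
  simp [one_add_pow_of_sq_eq_zero (DualNumber.eps_pow_two (R := R)), sum_add_distrib, mul_sum,
    mul_comm]

theorem total_semiperimeter_gf_with_empty_word [CommRing R] {k : ℕ} (hk : k ≠ 0) :
    (1 - 2 * X + X ^ (k + 1)) ^ 2 *
        (PowerSeries.mk fun n => ∑ w ∈ kbonWords n k, (wSper n (List.ofFn w) : R)) =
      (1 - 2 * X + X ^ (k + 1)) * (1 + X - ((k : R⟦X⟧) + 2) * X ^ k) +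
        (1 - X ^ k) * (2 * X + X ^ 2 - ((k : R⟦X⟧) + 2) * X ^ (k + 1)) := by
  have hgf := semiperimeter_gf hk (1 + ε : R[ε])
  rw [mk_sum_one_add_eps_pow] at hgf
  set count : R⟦X⟧ := .mk fun n => ((kbonWords n k).card : R)
  set total : R⟦X⟧ := .mk fun n => ∑ w ∈ kbonWords n k, (wSper n (List.ofFn w) : R)
  have hε : (C ε : R[ε]⟦X⟧) ^ 2 = 0 := by rw [← map_pow, DualNumber.eps_pow_two, map_zero]
  obtain ⟨hcount, htotal⟩ : (1 - 2 * X + X ^ (k + 1)) * count = 1 - X ^ k ∧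
      (-2 * X - X ^ 2 + ((k : R⟦X⟧) + 2) * X ^ (k + 1)) * count +
          (1 - 2 * X + X ^ (k + 1)) * total =
        1 + X - ((k : R⟦X⟧) + 2) * X ^ k := by
    refine map_inl_add_C_eps_mul_map_inl_inj ?_
    simp only [map_add, map_one, one_add_pow_of_sq_eq_zero hε] at hgf
    simp only [map_add, map_sub, map_mul, map_neg, map_pow, map_one, map_natCast, map_ofNat, map_X]
    push_cast at hgf
    linear_combination hgf -
      (-2 * X - X ^ 2 + ((k : R[ε]⟦X⟧) + 2) * X ^ (k + 1)) * ι total * hε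
  linear_combination (1 - 2 * X + X ^ (k + 1)) * htotal +
    (2 * X + X ^ 2 - ((k : R⟦X⟧) + 2) * X ^ (k + 1)) * hcount

end DualNumbers

lemma mk_ite_eq_zero_eq_sub_C {R : Type*} [Ring R] (a : ℕ → R) :
    (PowerSeries.mk fun n => if n = 0 then 0 else a n) = .mk a - C (a 0) := by
  ext n
  rcases eq_or_ne n 0 with rfl | hn
  · simp
  · simp [hn, coeff_C]

lemma sum_wSper_kbonWords_zero {k : ℕ} (hk : k ≠ 0) :
    ∑ w ∈ kbonWords 0 k, wSper 0 (List.ofFn w) = 1 := by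
  simp [kbonWords, wSper, wRuns, hk]

theorem total_semiperimeter_gf_general {R : Type*} [CommRing R] {k : ℕ} (hk : k ≠ 0) :
    (1 - 2 * X + X ^ (k + 1)) ^ 2 *
        PowerSeries.mk (fun n =>
          if n = 0 then 0 else ∑ w ∈ kbonWords n k, (wSper n (List.ofFn w) : R)) =
      5 * X - 5 * X ^ 2 - (2 + (k : R⟦X⟧)) * X ^ k - (1 - (k : R⟦X⟧)) * X ^ (k + 1) +
        4 * X ^ (k + 2) - X ^ (2 * k + 2) := by
  rw [mk_ite_eq_zero_eq_sub_C, ← Nat.cast_sum (kbonWords 0 k), sum_wSper_kbonWords_zero hk,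
    Nat.cast_one, map_one]
  linear_combination total_semiperimeter_gf_with_empty_word (R := R) hk

theorem total_semiperimeter_gf (k : ℕ) (hk : 2 ≤ k) :
    (1 - 2 * PowerSeries.X + PowerSeries.X ^ (k + 1)) ^ 2
      * PowerSeries.mk (fun n =>
          if n = 0 then 0 else ∑ w ∈ kbonWords n k, (wSper n (List.ofFn w) : ℤ))
    = PowerSeries.C (R := ℤ) 5 * PowerSeries.X
        - PowerSeries.C (R := ℤ) 5 * PowerSeries.X ^ 2
        - PowerSeries.C (R := ℤ) (2 + k) * PowerSeries.X ^ k
        - PowerSeries.C (R := ℤ) (1 - (k : ℤ)) * PowerSeries.X ^ (k + 1)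
        + PowerSeries.C (R := ℤ) 4 * PowerSeries.X ^ (k + 2)
        - PowerSeries.X ^ (2 * k + 2) := by
  simpa only [map_add, map_sub, map_one, map_natCast, map_ofNat] using
    total_semiperimeter_gf_general (R := ℤ) (k := k) (by omega)
end

section
/- For all n ≥ 1, the total area of all Fibonacci polyominoes with n columns satisfies Σ_{w ∈ F_{n,2}} (n + s(w)) = Σ_{i=0}^{⌊(n+1)/2⌋} C(n+1−i, i)·(n+i) = (1/5)·(6n·F_{n+2} + (n+2)·F_n), where F_m is the m-th Fibonacci number. -/
/-!
Every word of `F_{n+2,2}` is uniquely `0w` with `w ∈ F_{n+1,2}` or `10w` with `w ∈ F_{n,2}`. Summing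
a statistic over both kinds of words turns this into a recurrence: for the number of words it is the
Fibonacci recurrence, for the number of words with `i` ones it is Pascal's rule for `C(n+1-i, i)`,
and for the total number of ones `T_n` it reads `T_{n+2} = T_{n+1} + T_n + F_{n+2}`, which is solved
by `5 T_n = n F_{n+2} + (n + 2) F_n`.
-/

open Finset

/-- Number of `1`s in a binary word. -/
def wOnes (w : List Bool) : ℕ := w.count true

section Recursion

variable {n : ℕ}

lemma mem_kbonWords {k : ℕ} {w : Fin n → Bool} :
    w ∈ kbonWords n k ↔ ¬ List.replicate k true <:+: List.ofFn w := by
  simp [kbonWords]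

lemma wOnes_cons (b : Bool) (l : List Bool) : wOnes (b :: l) = wOnes l + b.toNat := by
  cases b <;> simp [wOnes]

lemma vecCons_false_mem_kbonWords {k : ℕ} {w : Fin n → Bool} :
    Matrix.vecCons false w ∈ kbonWords (n + 1) k ↔ w ∈ kbonWords n k := by
  cases k <;>
    simp [mem_kbonWords, Matrix.vecCons, List.infix_cons_iff, List.replicate_succ]

lemma vecCons_true_vecCons_mem_kbonWords_two {b : Bool} {w : Fin n → Bool} :
    Matrix.vecCons true (Matrix.vecCons b w) ∈ kbonWords (n + 2) 2 ↔
      b = false ∧ w ∈ kbonWords n 2 := by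
  cases b <;> simp [mem_kbonWords, Matrix.vecCons, List.infix_cons_iff, List.replicate_succ]

lemma sum_univ_vecCons {α M : Type*} [Fintype α] [AddCommMonoid M] (f : (Fin (n + 1) → α) → M) :
    ∑ w, f w = ∑ a, ∑ w, f (Matrix.vecCons a w) := by
  rw [← (Fin.consEquiv fun _ : Fin (n + 1) ↦ α).sum_comp, Fintype.sum_prod_type]
  rfl

lemma sum_kbonWords_two_add_two {M : Type*} [AddCommMonoid M] (f : (Fin (n + 2) → Bool) → M) :
    ∑ w ∈ kbonWords (n + 2) 2, f w =
      ∑ w ∈ kbonWords (n + 1) 2, f (Matrix.vecCons false w) +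
        ∑ w ∈ kbonWords n 2, f (Matrix.vecCons true (Matrix.vecCons false w)) := by
  have sum_eq_ite {m : ℕ} (g : (Fin m → Bool) → M) :
      ∑ w ∈ kbonWords m 2, g w = ∑ w, if w ∈ kbonWords m 2 then g w else 0 := by simp
  have sum_true : (∑ w : Fin (n + 1) → Bool, if Matrix.vecCons true w ∈ kbonWords (n + 2) 2 then
      f (Matrix.vecCons true w) else 0) =
        ∑ w ∈ kbonWords n 2, f (Matrix.vecCons true (Matrix.vecCons false w)) := by
    simp [sum_univ_vecCons, vecCons_true_vecCons_mem_kbonWords_two]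
  rw [sum_eq_ite, sum_univ_vecCons, Fintype.sum_bool, sum_true, add_comm]
  simp [vecCons_false_mem_kbonWords]

lemma sum_comp_wOnes_kbonWords_two_add_two {M : Type*} [AddCommMonoid M] (f : ℕ → M) :
    ∑ w ∈ kbonWords (n + 2) 2, f (wOnes (List.ofFn w)) =
      ∑ w ∈ kbonWords (n + 1) 2, f (wOnes (List.ofFn w)) +
        ∑ w ∈ kbonWords n 2, f (wOnes (List.ofFn w) + 1) := by
  simp [sum_kbonWords_two_add_two, Matrix.vecCons, wOnes_cons]

end Recursion

lemma kbonWords_zero_two : kbonWords 0 2 = {![]} := by decide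

lemma kbonWords_one_two : kbonWords 1 2 = {![false], ![true]} := by decide

lemma card_kbonWords_two (n : ℕ) : #(kbonWords n 2) = Nat.fib (n + 2) := by
  induction n using Nat.twoStepInduction with
  | zero => simp [kbonWords_zero_two]
  | one => decide
  | more n ih₀ ih₁ =>
    rw [card_eq_sum_ones, sum_kbonWords_two_add_two, ← card_eq_sum_ones, ← card_eq_sum_ones,
      ih₀, ih₁, add_comm, ← Nat.fib_add_two]

lemma succ_sub_choose_succ (n i : ℕ) :
    (n + 1 - i).choose (i + 1) = (n - i).choose (i + 1) + (n - i).choose i := by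
  rcases le_or_gt i n with hi | hi
  · rw [Nat.sub_add_comm hi, Nat.choose_succ_succ', add_comm]
  · simp only [Nat.choose_eq_zero_of_lt, show n + 1 - i < i + 1 by lia, show n - i < i + 1 by lia,
      show n - i < i by lia]

lemma card_kbonWords_two_wOnes_eq (n i : ℕ) :
    #{w ∈ kbonWords n 2 | wOnes (List.ofFn w) = i} = (n + 1 - i).choose i := by
  induction n using Nat.twoStepInduction generalizing i with
  | zero => rcases i with _ | _ | i <;> simp [kbonWords_zero_two, wOnes]
  | one =>
    rcases i with _ | _ | i <;>
      simp [kbonWords_one_two, wOnes, filter_insert, filter_singleton]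
  | more n ih₀ ih₁ =>
    have recurrence : #{w ∈ kbonWords (n + 2) 2 | wOnes (List.ofFn w) = i} =
        #{w ∈ kbonWords (n + 1) 2 | wOnes (List.ofFn w) = i} +
          #{w ∈ kbonWords n 2 | wOnes (List.ofFn w) + 1 = i} := by
      simp only [card_filter]
      exact sum_comp_wOnes_kbonWords_two_add_two fun j ↦ if j = i then 1 else 0
    rcases i with _ | i
    · rw [recurrence, ih₁]
      simp
    · have pascal := succ_sub_choose_succ (n + 1) i
      simpa only [recurrence, add_left_inj, ih₀, ih₁, Nat.add_sub_add_right] using pascal.symm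

lemma sum_comp_wOnes_kbonWords_two {M : Type*} [AddCommMonoid M] (n : ℕ) (f : ℕ → M) :
    ∑ w ∈ kbonWords n 2, f (wOnes (List.ofFn w)) =
      ∑ i ∈ range ((n + 1) / 2 + 1), (n + 1 - i).choose i • f i := by
  have wOnes_mem {w} (hw : w ∈ kbonWords n 2) :
      wOnes (List.ofFn w) ∈ range ((n + 1) / 2 + 1) := by
    have fiber_card_ne_zero :
        #{v ∈ kbonWords n 2 | wOnes (List.ofFn v) = wOnes (List.ofFn w)} ≠ 0 :=
      card_ne_zero_of_mem (mem_filter.mpr ⟨hw, rfl⟩)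
    rw [card_kbonWords_two_wOnes_eq, Nat.choose_ne_zero_iff] at fiber_card_ne_zero
    rw [mem_range]
    lia
  rw [← sum_fiberwise_of_maps_to (fun _ ↦ wOnes_mem)]
  refine sum_congr rfl fun i _ ↦ ?_
  rw [← card_kbonWords_two_wOnes_eq]
  exact sum_eq_card_nsmul fun w hw ↦ by rw [(mem_filter.mp hw).2]

lemma five_mul_sum_wOnes_kbonWords_two (n : ℕ) :
    5 * ∑ w ∈ kbonWords n 2, wOnes (List.ofFn w) =
      n * Nat.fib (n + 2) + (n + 2) * Nat.fib n := by
  induction n using Nat.twoStepInduction with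
  | zero => simp [kbonWords_zero_two, wOnes]
  | one => decide
  | more n ih₀ ih₁ =>
    have recurrence : ∑ w ∈ kbonWords (n + 2) 2, wOnes (List.ofFn w) =
        ∑ w ∈ kbonWords (n + 1) 2, wOnes (List.ofFn w) +
          (∑ w ∈ kbonWords n 2, wOnes (List.ofFn w) + Nat.fib (n + 2)) := by
      simpa [sum_add_distrib, card_kbonWords_two] using
        sum_comp_wOnes_kbonWords_two_add_two (n := n) id
    have fib₂ := Nat.fib_add_two (n := n)
    have fib₃ := Nat.fib_add_two (n := n + 1)
    have fib₄ := Nat.fib_add_two (n := n + 2)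
    grind

theorem total_area_fibonacci (n : ℕ) (hn : 1 ≤ n) :
    (∑ w ∈ kbonWords n 2, ((n : ℚ) + (wOnes (List.ofFn w) : ℚ)))
        = ∑ i ∈ Finset.range ((n + 1) / 2 + 1),
            (Nat.choose (n + 1 - i) i : ℚ) * ((n : ℚ) + (i : ℚ))
    ∧ (∑ w ∈ kbonWords n 2, ((n : ℚ) + (wOnes (List.ofFn w) : ℚ)))
        = (6 * (n : ℚ) * (Nat.fib (n + 2) : ℚ) + ((n : ℚ) + 2) * (Nat.fib n : ℚ)) / 5 := by
  constructor
  · simpa only [nsmul_eq_mul] using sum_comp_wOnes_kbonWords_two n fun i ↦ (n : ℚ) + i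
  · have total_ones : 5 * ∑ w ∈ kbonWords n 2, (wOnes (List.ofFn w) : ℚ) =
        n * Nat.fib (n + 2) + (n + 2) * Nat.fib n := by
      exact_mod_cast five_mul_sum_wOnes_kbonWords_two n
    rw [sum_add_distrib, sum_const, card_kbonWords_two, nsmul_eq_mul]
    linarith
end
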